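/- Let M be an o-minimal structure in a language L and let A ⊆ M be a definable set with |A| > 1. Then the set S^def(A) of definable types over A has cardinality at most |A|^{|L| + ℵ₀}. -/

import Mathlib

open FirstOrder FirstOrder.Language Set Cardinal Filter Topology

universe u

/-- A subset of a linear order is a finite union of points and open intervals
with endpoints in `M ∪ {-∞, +∞}` (lower endpoints in `WithBot M = M ∪ {-∞}`,
upper endpoints in `WithTop M = M ∪ {+∞}`). -/
def IsFinUnionPointsIntervals {M : Type*} [LinearOrder M] (s : Set M) : Prop :=
  ∃ (P : Finset M) (I : Finset (WithBot M × WithTop M)),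
    s = ↑P ∪ ⋃ p ∈ I, {x : M | p.1 < (x : WithBot M) ∧ (x : WithTop M) < p.2}

/-- `M` is an o-minimal `L`-structure: the language defines the linear order of `M`,
which is dense and without endpoints, and every subset of `M` definable with parameters
is a finite union of points and open intervals with endpoints in `M ∪ {-∞, +∞}`. -/
structure IsOMinimal (L : FirstOrder.Language) (M : Type*) [L.Structure M] [LinearOrder M] :
    Prop where
  denselyOrdered : DenselyOrdered M
  noMinOrder : NoMinOrder M
  noMaxOrder : NoMaxOrder M
  definable_lt : (∅ : Set M).Definable L {x : Fin 2 → M | x 0 < x 1}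
  tame : ∀ s : Set M, (Set.univ : Set M).Definable₁ L s → IsFinUnionPointsIntervals s

/-- Given a formula `φ(x;y)` of `L` (with `x` an `m`-tuple and `y` an `n`-tuple) and a tuple
`b` of parameters from `A`, the sentence `φ(x;b)` of the language `L[[A]][[Fin m]]` obtained
by substituting the constants `b` for the variables `y` (complete types over `A` in variables
`x` are maximal consistent sets of such sentences). -/
noncomputable def paramSentenceOver {L : FirstOrder.Language} {M : Type*} [L.Structure M]
    (A : Set M) {m n : ℕ} (φ : L.Formula (Fin m ⊕ Fin n)) (b : Fin n → A) :
    (L[[↥A]])[[Fin m]].Sentence :=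
  Formula.equivSentence
    (((L.lhomWithConstants ↥A).onFormula φ).subst
      (Sum.elim Term.var fun j => (L.con (b j)).term))

/-- A complete type `p(x)` over `A ⊆ M` (i.e. a complete type of the theory of `M` with
constants for the elements of `A`) is definable if, for every formula `φ(x;y)`, there are a
formula `ψ(y;z)` and a tuple `c ∈ M^|z|` such that
`{b ∈ A^|y| : φ(x;b) ∈ p} = ψ(A^|y|; c)`. -/
def IsDefinableTypeOver {L : FirstOrder.Language} {M : Type*} [L.Structure M] (A : Set M)
    {m : ℕ} (p : ((L[[↥A]]).completeTheory M).CompleteType (Fin m)) : Prop :=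
  ∀ (n : ℕ) (φ : L.Formula (Fin m ⊕ Fin n)),
    ∃ (k : ℕ) (ψ : L.Formula (Fin n ⊕ Fin k)) (c : Fin k → M),
      {b : Fin n → A | paramSentenceOver A φ b ∈ p} =
        {b : Fin n → A | ψ.Realize (Sum.elim (fun i => (b i : M)) c)}

/-!
Let `A` be definable over a finite set `B`. A definable type over `A` is determined by the traces on
`A` of its defining formulas `ψ(y; c)`, so it suffices to bound the number of types over `A` of
finite tuples `c` from `M`. Such a type is determined by a choice, for each formula `φ(x; y)` over
`B` that `c` satisfies together with some tuple `a` from `A`, of one such tuple: there are at most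
`|A| ^ (|L| + ℵ₀)` such choices.

To see this, argue by induction on the length and consider a tuple `(c, x)`. By o-minimality the
type of `x` over `A ∪ B ∪ c` is determined by the comparison of `x` with the values `χ(c, a)` of
definable partial functions at tuples `a` from `A`. If `x` is itself a value of `χ`, the chosen `a`
with `x = χ(c, a)` reduces the comparison to the type of `c`. Otherwise let `S` be the set of all
values `χ(c, a)`, which is definable because `A` is. Since `x ∉ S`, the position of `x` relative to
each point of `S` can be read off from the index of the convex component of `Sᶜ` that contains `x`,
which is part of the type of `(c, x)` over `B`.
-/

section Alternations

variable {M : Type*} [LinearOrder M] {S T : Set M} {j : ℕ} {x y : M}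

/-- Membership in `S` changes at least `j` times along some increasing finite sequence bounded
above by `x`. For fixed `j` this is a first-order condition on `x`, which is what makes it usable
as a definable substitute for the index of the convex component of `S` or `Sᶜ` containing `x`. -/
def HasAlternations (S : Set M) : ℕ → M → Prop
  | 0, _ => True
  | j + 1, x => ∃ u v, u < v ∧ v ≤ x ∧ ¬(u ∈ S ↔ v ∈ S) ∧ HasAlternations S j u

/-- The points at which the number of alternations of `S` is exactly `j`. -/
def alternationLevel (S : Set M) (j : ℕ) : Set M :=
  {x | HasAlternations S j x ∧ ¬HasAlternations S (j + 1) x}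

namespace HasAlternations

theorem mono (hx : HasAlternations S j x) (hxy : x ≤ y) : HasAlternations S j y := by
  cases j with
  | zero => trivial
  | succ j =>
    obtain ⟨u, v, huv, hvx, hne, hu⟩ := hx
    exact ⟨u, v, huv, hvx.trans hxy, hne, hu⟩

theorem succ_of_lt (hx : HasAlternations S j x) (hxy : x < y) (hne : ¬(x ∈ S ↔ y ∈ S)) :
    HasAlternations S (j + 1) y :=
  ⟨x, y, hxy, le_rfl, hne, hx⟩

open Classical in
theorem le_card_filter_upperSet {F : Finset (UpperSet M)}
    (hF : ∀ x y, (∀ U ∈ F, x ∈ U ↔ y ∈ U) → (x ∈ S ↔ y ∈ S)) (hx : HasAlternations S j x) :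
    j ≤ (F.filter (x ∈ ·)).card := by
  induction j generalizing x with
  | zero => exact Nat.zero_le _
  | succ j ih =>
    obtain ⟨u, v, huv, hvx, hne, hu⟩ := hx
    obtain ⟨U, hUF, hU⟩ : ∃ U ∈ F, ¬(u ∈ U ↔ v ∈ U) := by
      by_contra! h
      exact hne (hF u v h)
    have hvU : v ∈ U ∧ u ∉ U := by
      have : u ∈ U → v ∈ U := U.upper huv.le
      tauto
    have hlt : F.filter (u ∈ ·) ⊂ F.filter (x ∈ ·) := by
      refine Finset.ssubset_iff_subset_ne.2 ⟨?_, fun heq => hvU.2 ?_⟩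
      · exact Finset.monotone_filter_right F fun V _ huV => V.upper (huv.le.trans hvx) huV
      · have : U ∈ F.filter (x ∈ ·) := Finset.mem_filter.2 ⟨hUF, U.upper hvx hvU.1⟩
        rw [← heq, Finset.mem_filter] at this
        exact this.2
    exact (ih hu).trans_lt (Finset.card_lt_card hlt)

end HasAlternations

theorem isUpperSet_setOf_hasAlternations (S : Set M) (j : ℕ) :
    IsUpperSet {x | HasAlternations S j x} :=
  fun _ _ hxy hx => hx.mono hxy

theorem mem_iff_mem_of_mem_alternationLevel (hx : x ∈ alternationLevel S j)
    (hy : y ∈ alternationLevel S j) : x ∈ S ↔ y ∈ S := by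
  by_contra hne
  rcases lt_trichotomy x y with hxy | rfl | hyx
  · exact hy.2 (hx.1.succ_of_lt hxy hne)
  · exact hne Iff.rfl
  · exact hx.2 (hy.1.succ_of_lt hyx fun h => hne h.symm)

theorem mem_iff_nonempty_inter_alternationLevel (hx : x ∈ alternationLevel S j) :
    x ∈ S ↔ (S ∩ alternationLevel S j).Nonempty :=
  ⟨fun hxS => ⟨x, hxS, hx⟩,
    fun ⟨_, hyS, hy⟩ => (mem_iff_mem_of_mem_alternationLevel hx hy).2 hyS⟩

namespace IsFinUnionPointsIntervals

theorem exists_finset_upperSet (hS : IsFinUnionPointsIntervals S) :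
    ∃ F : Finset (UpperSet M), ∀ x y, (∀ U ∈ F, x ∈ U ↔ y ∈ U) → (x ∈ S ↔ y ∈ S) := by
  classical
  obtain ⟨P, I, rfl⟩ := hS
  let lower (p : WithBot M × WithTop M) : UpperSet M :=
    ⟨{x | p.1 < x}, fun _ _ hxy hx => hx.trans_le (WithBot.coe_le_coe.2 hxy)⟩
  let upper (p : WithBot M × WithTop M) : UpperSet M :=
    ⟨{x | p.2 ≤ x}, fun _ _ hxy hx => hx.trans (WithTop.coe_le_coe.2 hxy)⟩
  refine ⟨P.image UpperSet.Ici ∪ P.image UpperSet.Ioi ∪ (I.image lower ∪ I.image upper),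
    fun x y h => ?_⟩
  simp only [Finset.forall_mem_union, Finset.forall_mem_image, UpperSet.mem_Ici_iff,
    UpperSet.mem_Ioi_iff] at h
  obtain ⟨⟨hIci, hIoi⟩, hlower, hupper⟩ := h
  have hP : x ∈ P ↔ y ∈ P := by
    constructor
    · intro hx
      have := hIci hx
      have := hIoi hx
      grind
    · intro hy
      have := hIci hy
      have := hIoi hy
      grind
  have hI : ∀ p ∈ I, (p.1 < (x : WithBot M) ∧ (x : WithTop M) < p.2 ↔
      p.1 < (y : WithBot M) ∧ (y : WithTop M) < p.2) := fun p hp =>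
    and_congr (hlower hp) (lt_iff_lt_of_le_iff_le (hupper hp))
  simp only [mem_union, Finset.mem_coe, mem_iUnion, mem_ofPred_eq, exists_prop, hP]
  exact or_congr_right (exists_congr fun p => and_congr_right (hI p))

theorem exists_mem_alternationLevel (hS : IsFinUnionPointsIntervals S) (x : M) :
    ∃ j, x ∈ alternationLevel S j := by
  classical
  obtain ⟨F, hF⟩ := hS.exists_finset_upperSet
  by_contra! hlevel
  have hall : ∀ j, HasAlternations S j x := by
    intro j
    induction j with
    | zero => trivial
    | succ j ih => exact not_not.1 fun hj => hlevel j ⟨ih, hj⟩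
  exact (Nat.lt_succ_self _).not_ge ((hall _).le_card_filter_upperSet hF)

theorem lt_iff_exists_hasAlternations (hS : IsFinUnionPointsIntervals S)
    (hne : ¬(x ∈ S ↔ y ∈ S)) :
    x < y ↔ ∃ j, HasAlternations S j y ∧ ¬HasAlternations S j x := by
  constructor
  · intro hxy
    obtain ⟨j, hj, hj'⟩ := hS.exists_mem_alternationLevel x
    exact ⟨j + 1, hj.succ_of_lt hxy hne, hj'⟩
  · rintro ⟨j, hy, hx⟩
    exact lt_of_not_ge fun hyx => hx (hy.mono hyx)

end IsFinUnionPointsIntervals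

theorem cmp_eq_cmp_of_lt_iff_lt {x' y' : M} (hlt : x < y ↔ x' < y') (hgt : y < x ↔ y' < x') :
    cmp x y = cmp x' y' := by
  rcases lt_trichotomy x y with h | h | h
  · rw [(cmp_eq_lt_iff x y).2 h, (cmp_eq_lt_iff x' y').2 (hlt.1 h)]
  · have h' : x' = y' := by grind
    rw [(cmp_eq_eq_iff x y).2 h, (cmp_eq_eq_iff x' y').2 h']
  · rw [(cmp_eq_gt_iff x y).2 h, (cmp_eq_gt_iff x' y').2 (hgt.1 h)]

theorem cmp_eq_cmp_of_hasAlternations_iff {x' y' : M} (hS : IsFinUnionPointsIntervals S)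
    (hT : IsFinUnionPointsIntervals T) (hxx' : ∀ j, HasAlternations S j x ↔ HasAlternations T j x')
    (hyy' : ∀ j, HasAlternations S j y ↔ HasAlternations T j y') (hne : ¬(x ∈ S ↔ y ∈ S))
    (hne' : ¬(x' ∈ T ↔ y' ∈ T)) : cmp x y = cmp x' y' := by
  have hne₂ : ¬(y ∈ S ↔ x ∈ S) := fun h => hne h.symm
  have hne₂' : ¬(y' ∈ T ↔ x' ∈ T) := fun h => hne' h.symm
  apply cmp_eq_cmp_of_lt_iff_lt
  · simp only [hS.lt_iff_exists_hasAlternations hne, hT.lt_iff_exists_hasAlternations hne', hxx',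
      hyy']
  · simp only [hS.lt_iff_exists_hasAlternations hne₂, hT.lt_iff_exists_hasAlternations hne₂', hxx',
      hyy']

end Alternations

section UpperRays

variable {M : Type*} [LinearOrder M] {S T : Set M}

/-- An upper set that is empty, everything, or has an endpoint in `M`. -/
def IsUpperRay (S : Set M) : Prop :=
  S = ∅ ∨ S = Set.univ ∨ (∃ w, S = Ici w) ∨ ∃ w, S = Ioi w

theorem isUpperRay_setOf_coe_lt (a : WithBot M) : IsUpperRay {x : M | a < x} := by
  induction a using WithBot.recBotCoe with
  | bot => exact Or.inr (Or.inl (by simp))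
  | coe a => exact Or.inr (Or.inr (Or.inr ⟨a, by ext; simp⟩))

namespace IsUpperRay

theorem isUpperSet (hS : IsUpperRay S) : IsUpperSet S := by
  rcases hS with rfl | rfl | ⟨w, rfl⟩ | ⟨w, rfl⟩
  exacts [isUpperSet_empty, isUpperSet_univ, isUpperSet_Ici w, isUpperSet_Ioi w]

theorem union (hS : IsUpperRay S) (hT : IsUpperRay T) : IsUpperRay (S ∪ T) := by
  rcases hS.isUpperSet.total hT.isUpperSet with hST | hTS
  · rwa [union_eq_right.2 hST]
  · rwa [union_eq_left.2 hTS]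

theorem biUnion_finset {ι : Type*} {f : ι → Set M} (I : Finset ι)
    (hf : ∀ i ∈ I, IsUpperRay (f i)) : IsUpperRay (⋃ i ∈ I, f i) := by
  classical
  induction I using Finset.induction_on with
  | empty => exact Or.inl (by simp)
  | insert i I _ ih =>
    rw [Finset.set_biUnion_insert]
    exact (hf i (Finset.mem_insert_self i I)).union
      (ih fun k hk => hf k (Finset.mem_insert_of_mem hk))

end IsUpperRay

theorem isUpperRay_upperClosure_interval (p : WithBot M × WithTop M) :
    IsUpperRay (upperClosure {x : M | p.1 < x ∧ x < p.2} : Set M) := by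
  rcases eq_empty_or_nonempty {x : M | p.1 < x ∧ x < p.2} with hempty | ⟨x, hpx, hxp⟩
  · exact Or.inl (by simp [hempty])
  convert isUpperRay_setOf_coe_lt p.1
  ext y
  rw [SetLike.mem_coe, mem_upperClosure]
  refine ⟨fun ⟨u, hu, huy⟩ => hu.1.trans_le (WithBot.coe_le_coe.2 huy), fun hpy => ?_⟩
  rcases le_total x y with hxy | hyx
  · exact ⟨x, ⟨hpx, hxp⟩, hxy⟩
  · exact ⟨y, ⟨hpy, (WithTop.coe_le_coe.2 hyx).trans_lt hxp⟩, le_rfl⟩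

theorem IsFinUnionPointsIntervals.isUpperRay (hS : IsFinUnionPointsIntervals S)
    (hupper : IsUpperSet S) : IsUpperRay S := by
  rw [← hupper.upperClosure]
  obtain ⟨P, I, rfl⟩ := hS
  rw [upperClosure_union, UpperSet.coe_inf, ← biUnion_of_singleton (P : Set M)]
  simp only [upperClosure_iUnion, upperClosure_singleton, UpperSet.coe_iInf, UpperSet.coe_Ici,
    Finset.mem_coe]
  exact (IsUpperRay.biUnion_finset P fun w _ => Or.inr (Or.inr (Or.inl ⟨w, rfl⟩))).union
    (IsUpperRay.biUnion_finset I fun p _ => isUpperRay_upperClosure_interval p)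

end UpperRays

section DefinablePredicates

variable {L : FirstOrder.Language} {M : Type*} [L.Structure M] {B : Set M} {α β ι : Type*}

variable (L B) in
/-- Definability over `B`, phrased for predicates rather than sets so that the closure rules below
apply to a first-order condition by matching its outermost connective. -/
def DefinablePred (P : (ι → M) → Prop) : Prop :=
  B.Definable L {v | P v}

variable (L B) in
/-- A `B`-definable family of relations on the `β`-tuples, indexed by the `α`-tuples. -/
def DefinableRel (P : (α → M) → (β → M) → Prop) : Prop :=
  DefinablePred L B fun v : α ⊕ β → M => P (fun i => v (.inl i)) fun i => v (.inr i)

variable (L B) in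
/-- A `B`-definable family of subsets of `M`. The index is split into an `α`-tuple and a `β`-tuple,
since the former ranges over all of `M` and the latter is going to be taken from a set `A`. -/
def DefinableFamily (R : (α → M) → (β → M) → Set M) : Prop :=
  DefinablePred L B fun v : (α ⊕ β) ⊕ Unit → M =>
    v (.inr ()) ∈ R (fun i => v (.inl (.inl i))) fun i => v (.inl (.inr i))

namespace DefinablePred

variable {P Q : (ι → M) → Prop}

theorem and (hP : DefinablePred L B P) (hQ : DefinablePred L B Q) :
    DefinablePred L B fun v => P v ∧ Q v :=
  Set.Definable.inter hP hQ

theorem not (hP : DefinablePred L B P) : DefinablePred L B fun v => ¬P v :=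
  Set.Definable.compl hP

theorem imp (hP : DefinablePred L B P) (hQ : DefinablePred L B Q) :
    DefinablePred L B fun v => P v → Q v := by
  simpa only [not_and, not_not] using (hP.and hQ.not).not

theorem iff (hP : DefinablePred L B P) (hQ : DefinablePred L B Q) :
    DefinablePred L B fun v => P v ↔ Q v := by
  simpa only [iff_iff_implies_and_implies] using (hP.imp hQ).and (hQ.imp hP)

theorem subst {κ : Type*} (hP : DefinablePred L B P) (σ : ι → κ) :
    DefinablePred L B fun v : κ → M => P fun i => v (σ i) :=
  Set.Definable.preimage_comp σ hP

theorem forall_finite {κ : Type*} [Finite κ] {P : κ → (ι → M) → Prop}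
    (hP : ∀ i, DefinablePred L B (P i)) : DefinablePred L B fun v => ∀ i, P i v := by
  simpa only [DefinablePred, ← ofPred_forall] using Set.definable_iInter_of_finite hP

theorem exists_tuple [Finite β] {P : (ι → M) → (β → M) → Prop} (hP : DefinableRel L B P) :
    DefinablePred L B fun v => ∃ u, P v u :=
  Set.Definable.exists_of_finite hP

theorem exists_elem {R : (ι → M) → M → Prop}
    (hR : DefinablePred L B fun v : ι ⊕ Unit → M => R (fun i => v (.inl i)) (v (.inr ()))) :
    DefinablePred L B fun v => ∃ y, R v y := by
  have h := exists_tuple (P := fun v (u : Unit → M) => R v (u ())) hR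
  simpa only [(Equiv.funUnique Unit M).exists_congr_left, Equiv.funUnique_symm_apply,
    uniqueElim_const] using h

theorem forall_elem {R : (ι → M) → M → Prop}
    (hR : DefinablePred L B fun v : ι ⊕ Unit → M => R (fun i => v (.inl i)) (v (.inr ()))) :
    DefinablePred L B fun v => ∀ y, R v y := by
  simpa only [not_exists, not_not] using (exists_elem (R := fun v y => ¬R v y) hR.not).not

theorem mem {A : Set M} (hA : B.Definable₁ L A) (i : ι) : DefinablePred L B fun v => v i ∈ A :=
  subst (P := fun v : Fin 1 → M => v 0 ∈ A) hA fun _ => i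

theorem lt [LinearOrder M] (hlt : (∅ : Set M).Definable L {x : Fin 2 → M | x 0 < x 1}) (i j : ι) :
    DefinablePred L B fun v => v i < v j :=
  subst (P := fun v : Fin 2 → M => v 0 < v 1) (hlt.mono (empty_subset B)) ![i, j]

theorem le [LinearOrder M] (hlt : (∅ : Set M).Definable L {x : Fin 2 → M | x 0 < x 1}) (i j : ι) :
    DefinablePred L B fun v => v i ≤ v j := by
  simpa only [not_lt] using (lt (B := B) hlt j i).not

theorem formula_realize (φ : L.Formula ι) : DefinablePred (M := M) L B φ.Realize :=
  Set.Definable.mono (Set.empty_definable_iff.2 ⟨φ, rfl⟩) (empty_subset B)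

end DefinablePred

theorem DefinableRel.subst {P : (α → M) → (β → M) → Prop} (hP : DefinableRel L B P) (σ : α → ι)
    (τ : β → ι) : DefinablePred L B fun v : ι → M => P (fun i => v (σ i)) fun i => v (τ i) :=
  DefinablePred.subst hP (Sum.elim σ τ)

namespace DefinableFamily

variable {R : (α → M) → (β → M) → Set M}

theorem subst (hR : DefinableFamily L B R) (σ : α → ι) (τ : β → ι) (j : ι) :
    DefinablePred L B fun v : ι → M => v j ∈ R (fun i => v (σ i)) fun i => v (τ i) :=
  DefinablePred.subst hR (Sum.elim (Sum.elim σ τ) fun _ => j)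

theorem inter {R' : (α → M) → (β → M) → Set M} (hR : DefinableFamily L B R)
    (hR' : DefinableFamily L B R') : DefinableFamily L B fun c b => R c b ∩ R' c b :=
  DefinablePred.and hR hR'

theorem nonempty (hR : DefinableFamily L B R) : DefinableRel L B fun c b => (R c b).Nonempty :=
  DefinablePred.exists_elem
    (R := fun (v : α ⊕ β → M) y => y ∈ R (fun i => v (Sum.inl i)) fun i => v (Sum.inr i)) hR

theorem compl (hR : DefinableFamily L B R) : DefinableFamily L B fun c b => (R c b)ᶜ :=
  DefinablePred.not hR

theorem definable₁ (hR : DefinableFamily L B R) (c : α → M) (b : β → M) :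
    (Set.univ : Set M).Definable₁ L (R c b) := by
  obtain ⟨φ, hφ⟩ := Set.definable_iff_exists_formula_sum.1 (Set.Definable.mono hR (subset_univ B))
  refine Set.definable_iff_exists_formula_sum.2 ⟨φ.relabel (Sum.elim Sum.inl (Sum.elim
    (fun i => Sum.inl ⟨Sum.elim c b i, trivial⟩) fun _ => Sum.inr 0)), ?_⟩
  ext y
  have hy := Set.ext_iff.1 hφ (Sum.elim (Sum.elim c b) fun _ => y 0)
  simp only [mem_ofPred_eq, Sum.elim_inl, Sum.elim_inr] at hy
  simp only [mem_ofPred_eq, Formula.realize_relabel]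
  rw [hy]
  refine iff_of_eq (congrArg φ.Realize (funext fun i => ?_))
  rcases i with i | i | i <;> rfl

theorem image_of_definable₁ [Finite β] {A : Set M} (hA : B.Definable₁ L A)
    (hR : DefinableFamily L B R) (γ : Type*) :
    DefinableFamily L B fun c (_ : γ → M) => {y | ∃ a : β → M, (∀ i, a i ∈ A) ∧ y ∈ R c a} := by
  apply DefinablePred.exists_tuple
  exact (DefinablePred.forall_finite fun i => .mem hA (Sum.inr i)).and
    (hR.subst (fun i => Sum.inl (Sum.inl (Sum.inl i))) Sum.inr (Sum.inl (Sum.inr ())))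

section Order

variable [LinearOrder M]

theorem hasAlternations (hlt : (∅ : Set M).Definable L {x : Fin 2 → M | x 0 < x 1})
    (hR : DefinableFamily L B R) (j : ℕ) :
    DefinableFamily L B fun c b => {x | HasAlternations (R c b) j x} := by
  induction j with
  | zero => exact Set.definable_univ
  | succ j ih =>
    apply DefinablePred.exists_elem
    apply DefinablePred.exists_elem
    refine .and (.lt hlt (Sum.inl (Sum.inr ())) (Sum.inr ())) ?_
    refine .and (.le hlt (Sum.inr ()) (Sum.inl (Sum.inl (Sum.inr ())))) ?_
    let σ (i : α) : (((α ⊕ β) ⊕ Unit) ⊕ Unit) ⊕ Unit := Sum.inl (Sum.inl (Sum.inl (Sum.inl i)))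
    let τ (i : β) : (((α ⊕ β) ⊕ Unit) ⊕ Unit) ⊕ Unit := Sum.inl (Sum.inl (Sum.inl (Sum.inr i)))
    exact .and (.not (.iff (hR.subst σ τ _) (hR.subst σ τ _))) (ih.subst σ τ _)

theorem alternationLevel (hlt : (∅ : Set M).Definable L {x : Fin 2 → M | x 0 < x 1})
    (hR : DefinableFamily L B R) (j : ℕ) :
    DefinableFamily L B fun c b => alternationLevel (R c b) j :=
  .inter (hR.hasAlternations hlt j) (hR.hasAlternations hlt (j + 1)).compl

theorem setOf_eq_Ici (hlt : (∅ : Set M).Definable L {x : Fin 2 → M | x 0 < x 1})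
    (hR : DefinableFamily L B R) : DefinableFamily L B fun c b => {w | R c b = Ici w} := by
  simp only [Set.ext_iff, mem_Ici]
  apply DefinablePred.forall_elem
  refine .iff ?_ (.le hlt (Sum.inl (Sum.inr ())) (Sum.inr ()))
  exact hR.subst (fun i => Sum.inl (Sum.inl (Sum.inl i))) (fun i => Sum.inl (Sum.inl (Sum.inr i))) _

theorem setOf_eq_Ioi (hlt : (∅ : Set M).Definable L {x : Fin 2 → M | x 0 < x 1})
    (hR : DefinableFamily L B R) : DefinableFamily L B fun c b => {w | R c b = Ioi w} := by
  simp only [Set.ext_iff, mem_Ioi]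
  apply DefinablePred.forall_elem
  refine .iff ?_ (.lt hlt (Sum.inl (Sum.inr ())) (Sum.inr ()))
  exact hR.subst (fun i => Sum.inl (Sum.inl (Sum.inl i))) (fun i => Sum.inl (Sum.inl (Sum.inr i))) _

end Order

end DefinableFamily

end DefinablePredicates

section Types

/-- O-minimality of an ordered structure without the requirement that the order is dense and has no
endpoints; for instance `ℕ` and `ℤ` as pure orders qualify. -/
structure IsOMinimalExpansion (L : FirstOrder.Language) (M : Type*) [L.Structure M]
    [LinearOrder M] : Prop where
  definable_lt : (∅ : Set M).Definable L {x : Fin 2 → M | x 0 < x 1}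
  tame : ∀ s : Set M, (Set.univ : Set M).Definable₁ L s → IsFinUnionPointsIntervals s

theorem IsOMinimal.isOMinimalExpansion {L : FirstOrder.Language} {M : Type*} [L.Structure M]
    [LinearOrder M] (hM : IsOMinimal L M) : IsOMinimalExpansion L M :=
  ⟨hM.definable_lt, hM.tame⟩

variable {L : FirstOrder.Language} {M : Type*} [L.Structure M] {A B : Set M} {α ι : Type*}
  {β : Type} {c d : α → M} {b : β → M} {w w' x z : M} {R χ : (α → M) → (β → M) → Set M}

variable (L A B) in
/-- The tuples `c` and `d` have the same type over `A ∪ B`. The parameters from `B` are those of the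
definable relation, the parameters from `A` are its second argument. -/
def SameTypeOver (c d : α → M) : Prop :=
  ∀ ⦃β : Type⦄ [Finite β] ⦃P : (α → M) → (β → M) → Prop⦄, DefinableRel L B P →
    ∀ b : β → M, (∀ i, b i ∈ A) → (P c b ↔ P d b)

variable (L A B) in
/-- Every `B`-definable relation which `c` bears to some tuple from `A` is one that `c` and `d` bear
to a common tuple from `A`. -/
def HaveCommonWitnesses (c d : α → M) : Prop :=
  ∀ ⦃β : Type⦄ [Finite β] ⦃P : (α → M) → (β → M) → Prop⦄, DefinableRel L B P →
    ∀ b : β → M, (∀ i, b i ∈ A) → P c b → ∃ a : β → M, (∀ i, a i ∈ A) ∧ P c a ∧ P d a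

namespace SameTypeOver

theorem comp (h : SameTypeOver L A B c d) (σ : ι → α) :
    SameTypeOver L A B (fun i => c (σ i)) fun i => d (σ i) :=
  fun _ _ P hP => h (P := fun v b => P (fun i => v (σ i)) b)
    (hP.subst (fun i => Sum.inl (σ i)) Sum.inr)

variable [Finite β]

theorem nonempty_iff (h : SameTypeOver L A B c d) (hR : DefinableFamily L B R)
    (hb : ∀ i, b i ∈ A) : (R c b).Nonempty ↔ (R d b).Nonempty :=
  h hR.nonempty b hb

theorem mem_iff_of_subsingleton (h : SameTypeOver L A B c d) (hR : DefinableFamily L B R)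
    (hχ : DefinableFamily L B χ) (hχ₁ : ∀ c b, (χ c b).Subsingleton) (hb : ∀ i, b i ∈ A)
    (hw : w ∈ χ c b) (hw' : w' ∈ χ d b) : w ∈ R c b ↔ w' ∈ R d b := by
  have mem_iff {e : α → M} {y : M} (hy : y ∈ χ e b) : y ∈ R e b ↔ (R e b ∩ χ e b).Nonempty :=
    ⟨fun hyR => ⟨y, hyR, hy⟩, fun ⟨_, huR, hu⟩ => hχ₁ e b hu hy ▸ huR⟩
  rw [mem_iff hw, mem_iff hw', h.nonempty_iff (hR.inter hχ) hb]

theorem lt_iff_lt_of_subsingleton [LinearOrder M]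
    (hlt : (∅ : Set M).Definable L {x : Fin 2 → M | x 0 < x 1}) (h : SameTypeOver L A B c d)
    (hχ : DefinableFamily L B χ) (hχ₁ : ∀ c b, (χ c b).Subsingleton) {a : β → M}
    (ha : ∀ i, a i ∈ A) (hb : ∀ i, b i ∈ A) (hx : x ∈ χ c a) (hz : z ∈ χ d a) (hw : w ∈ χ c b)
    (hw' : w' ∈ χ d b) : x < w ↔ z < w' := by
  let P (e : α → M) (ab : β ⊕ β → M) : Prop :=
    ∃ u v, u < v ∧ u ∈ χ e (fun i => ab (.inl i)) ∧ v ∈ χ e fun i => ab (.inr i)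
  have hP : DefinableRel L B P := by
    apply DefinablePred.exists_elem
    apply DefinablePred.exists_elem
    refine .and (.lt hlt (Sum.inl (Sum.inr ())) (Sum.inr ())) (.and ?_ ?_)
    · exact hχ.subst (fun i => Sum.inl (Sum.inl (Sum.inl i)))
        (fun i => Sum.inl (Sum.inl (Sum.inr (Sum.inl i)))) _
    · exact hχ.subst (fun i => Sum.inl (Sum.inl (Sum.inl i)))
        (fun i => Sum.inl (Sum.inl (Sum.inr (Sum.inr i)))) _
  have lt_iff {e : α → M} {u v : M} (hu : u ∈ χ e a) (hv : v ∈ χ e b) :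
      u < v ↔ P e (Sum.elim a b) := by
    refine ⟨fun huv => ⟨u, v, huv, hu, hv⟩, fun ⟨u', v', huv', hu', hv'⟩ => ?_⟩
    rwa [hχ₁ e a hu hu', hχ₁ e b hv hv']
  rw [lt_iff hx hw, lt_iff hz hw']
  exact h hP _ (Sum.forall.2 ⟨ha, hb⟩)

end SameTypeOver

namespace HaveCommonWitnesses

theorem comp (h : HaveCommonWitnesses L A B c d) (σ : ι → α) :
    HaveCommonWitnesses L A B (fun i => c (σ i)) fun i => d (σ i) :=
  fun _ _ P hP => h (P := fun v b => P (fun i => v (σ i)) b)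
    (hP.subst (fun i => Sum.inl (σ i)) Sum.inr)

theorem iff_of_definablePred (h : HaveCommonWitnesses L A B c d) {P : (α → M) → Prop}
    (hP : DefinablePred L B P) : P c ↔ P d := by
  have imp {Q : (α → M) → Prop} (hQ : DefinablePred L B Q) (hc : Q c) : Q d := by
    obtain ⟨_, -, -, hd⟩ := h (P := fun v (_ : Empty → M) => Q v) (hQ.subst Sum.inl) Empty.elim
      nofun hc
    exact hd
  exact ⟨imp hP, not_imp_not.1 (imp hP.not)⟩

theorem exists_mem [Finite β]
    (hxz : HaveCommonWitnesses L A B (Option.elim · x c) (Option.elim · z d))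
    (hR : DefinableFamily L B R) (hb : ∀ i, b i ∈ A) (hx : x ∈ R c b) :
    ∃ a : β → M, (∀ i, a i ∈ A) ∧ x ∈ R c a ∧ z ∈ R d a :=
  hxz (P := fun v a => v none ∈ R (fun i => v (some i)) a)
    (hR.subst (fun i => Sum.inl (some i)) Sum.inr _) b hb hx

theorem mem_iff_mem {S : (α → M) → Set M}
    (hxz : HaveCommonWitnesses L A B (Option.elim · x c) (Option.elim · z d))
    (hS : DefinableFamily L B fun c (_ : Empty → M) => S c) : x ∈ S c ↔ z ∈ S d :=
  hxz.iff_of_definablePred (P := fun v => v none ∈ S fun i => v (some i))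
    (hS.subst some Empty.elim none)

variable [LinearOrder M] [Finite β]

theorem cmp_eq_cmp_of_subsingleton (hM : IsOMinimalExpansion L M) (hA : B.Definable₁ L A)
    (hcd : SameTypeOver L A B c d)
    (hxz : HaveCommonWitnesses L A B (Option.elim · x c) (Option.elim · z d))
    (hχ : DefinableFamily L B χ) (hχ₁ : ∀ c b, (χ c b).Subsingleton) (hb : ∀ i, b i ∈ A)
    (hw : w ∈ χ c b) (hw' : w' ∈ χ d b) : cmp w x = cmp w' z := by
  let S (e : α → M) : Set M := {y | ∃ a : β → M, (∀ i, a i ∈ A) ∧ y ∈ χ e a}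
  have hS (γ : Type) : DefinableFamily L B fun e (_ : γ → M) => S e :=
    hχ.image_of_definable₁ hA γ
  by_cases hx : x ∈ S c
  · obtain ⟨a₀, ha₀, hxa₀⟩ := hx
    obtain ⟨a, ha, hxa, hza⟩ := hxz.exists_mem hχ ha₀ hxa₀
    exact cmp_eq_cmp_of_lt_iff_lt
      (hcd.lt_iff_lt_of_subsingleton hM.definable_lt hχ hχ₁ hb ha hw hw' hxa hza)
      (hcd.lt_iff_lt_of_subsingleton hM.definable_lt hχ hχ₁ ha hb hxa hza hw hw')
  · have hz : z ∉ S d := (hxz.mem_iff_mem (hS Empty)).not.1 hx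
    have hwS : w ∈ S c := ⟨b, hb, hw⟩
    have hwS' : w' ∈ S d := ⟨b, hb, hw'⟩
    apply cmp_eq_cmp_of_hasAlternations_iff (S := S c) (T := S d)
    · exact hM.tame _ ((hS β).definable₁ c b)
    · exact hM.tame _ ((hS β).definable₁ d b)
    · exact fun j => hcd.mem_iff_of_subsingleton ((hS β).hasAlternations hM.definable_lt j) hχ hχ₁
        hb hw hw'
    · exact fun j => hxz.mem_iff_mem ((hS Empty).hasAlternations hM.definable_lt j)
    · exact fun h => hx (h.1 hwS)
    · exact fun h => hz (h.1 hwS')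

theorem mem_iff_mem_of_isUpperSet (hM : IsOMinimalExpansion L M) (hA : B.Definable₁ L A)
    (hcd : SameTypeOver L A B c d)
    (hxz : HaveCommonWitnesses L A B (Option.elim · x c) (Option.elim · z d))
    (hR : DefinableFamily L B R) (hupper : ∀ c b, IsUpperSet (R c b)) (hb : ∀ i, b i ∈ A) :
    x ∈ R c b ↔ z ∈ R d b := by
  rcases (hM.tame _ (hR.definable₁ c b)).isUpperRay (hupper c b) with hc | hc | ⟨w, hc⟩ | ⟨w, hc⟩
  · have hd : R d b = ∅ := by
      rw [← not_nonempty_iff_eq_empty, ← hcd.nonempty_iff hR hb, hc, not_nonempty_iff_eq_empty]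
    simp only [hc, hd, mem_empty_iff_false]
  · have hd : R d b = Set.univ := by
      rw [← compl_empty_iff, ← not_nonempty_iff_eq_empty, ← hcd.nonempty_iff hR.compl hb, hc,
        compl_univ, not_nonempty_iff_eq_empty]
    simp only [hc, hd, mem_univ]
  · have hχ := hR.setOf_eq_Ici hM.definable_lt
    obtain ⟨w', hd⟩ := (hcd.nonempty_iff hχ hb).1 ⟨w, hc⟩
    have hcmp := cmp_eq_cmp_of_subsingleton hM hA hcd hxz hχ
      (fun _ _ _ hu _ hv => Ici_injective (hu.symm.trans hv)) hb hc hd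
    rw [hc, show R d b = _ from hd, mem_Ici, mem_Ici, le_iff_le_of_cmp_eq_cmp hcmp]
  · have hχ := hR.setOf_eq_Ioi hM.definable_lt
    obtain ⟨w', hd⟩ := (hcd.nonempty_iff hχ hb).1 ⟨w, hc⟩
    have hcmp := cmp_eq_cmp_of_subsingleton hM hA hcd hxz hχ
      (fun _ _ _ hu _ hv => Ioi_injective (hu.symm.trans hv)) hb hc hd
    rw [hc, show R d b = _ from hd, mem_Ioi, mem_Ioi, lt_iff_lt_of_cmp_eq_cmp hcmp]

theorem mem_iff_mem_of_sameTypeOver (hM : IsOMinimalExpansion L M) (hA : B.Definable₁ L A)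
    (hcd : SameTypeOver L A B c d)
    (hxz : HaveCommonWitnesses L A B (Option.elim · x c) (Option.elim · z d))
    (hR : DefinableFamily L B R) (hb : ∀ i, b i ∈ A) : x ∈ R c b ↔ z ∈ R d b := by
  obtain ⟨j, hx⟩ := (hM.tame _ (hR.definable₁ c b)).exists_mem_alternationLevel x
  have hasAlternations_iff (i : ℕ) : HasAlternations (R c b) i x ↔ HasAlternations (R d b) i z :=
    mem_iff_mem_of_isUpperSet hM hA hcd hxz (hR.hasAlternations hM.definable_lt i)
      (fun c b => isUpperSet_setOf_hasAlternations (R c b) i) hb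
  have hz : z ∈ alternationLevel (R d b) j :=
    ⟨(hasAlternations_iff j).1 hx.1, (hasAlternations_iff (j + 1)).not.1 hx.2⟩
  rw [mem_iff_nonempty_inter_alternationLevel hx, mem_iff_nonempty_inter_alternationLevel hz]
  exact hcd.nonempty_iff (hR.inter (hR.alternationLevel hM.definable_lt j)) hb

theorem sameTypeOver_option {c d : Option α → M} (hM : IsOMinimalExpansion L M)
    (hA : B.Definable₁ L A) (hcd : SameTypeOver L A B (fun i => c (some i)) fun i => d (some i))
    (h : HaveCommonWitnesses L A B c d) : SameTypeOver L A B c d := by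
  intro β _ P hP b hb
  have elim_eq (v : Option α → M) : (Option.elim · (v none) fun i => v (some i)) = v :=
    funext (Option.rec rfl fun _ => rfl)
  have hR : DefinableFamily L B fun e b => {y : M | P (Option.elim · y e) b} := by
    let σ : Option α → (α ⊕ β) ⊕ Unit := (Option.elim · (Sum.inr ()) fun i => Sum.inl (Sum.inl i))
    have hσ : DefinablePred L B fun v => P (fun o => v (σ o)) fun i => v (Sum.inl (Sum.inr i)) :=
      hP.subst σ _
    have comp_eq (v : (α ⊕ β) ⊕ Unit → M) : (fun o => v (σ o)) =
        (Option.elim · (v (.inr ())) fun i => v (.inl (.inl i))) := (elim_eq _).symm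
    simp only [comp_eq] at hσ
    exact hσ
  have := mem_iff_mem_of_sameTypeOver hM hA hcd (by rwa [elim_eq, elim_eq]) hR hb
  simpa only [mem_ofPred_eq, elim_eq] using this

theorem sameTypeOver [Finite α] (hM : IsOMinimalExpansion L M) (hA : B.Definable₁ L A)
    (h : HaveCommonWitnesses L A B c d) : SameTypeOver L A B c d := by
  induction α using Finite.induction_empty_option with
  | of_equiv e ih => simpa only [e.apply_symm_apply] using (ih (h.comp e)).comp e.symm
  | h_empty => exact fun _ _ _ _ _ _ => by rw [Subsingleton.elim c d]
  | h_option ih => exact sameTypeOver_option hM hA (ih (h.comp some)) h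

end HaveCommonWitnesses

end Types

section Cardinals

theorem mk_sigma_le_of_countable {ι : Type} [Countable ι] {f : ι → Type u} {μ : Cardinal.{u}}
    (hμ : ℵ₀ ≤ μ) (hf : ∀ i, #(f i) ≤ μ) : #(Σ i, f i) ≤ μ :=
  calc #(Σ i, f i) = Cardinal.sum fun i => #(f i) := mk_sigma f
    _ ≤ Cardinal.sum fun _ : ι => μ := sum_le_sum _ _ hf
    _ = lift.{u} #ι * μ := by rw [sum_const, lift_uzero]
    _ ≤ μ * μ := mul_le_mul_left ((lift_le_aleph0.2 mk_le_aleph0).trans hμ) μ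
    _ = μ := mul_eq_self hμ

theorem mk_pi_le_power {ι : Type u} {f : ι → Type u} {a κ : Cardinal.{u}} (ha : a ≠ 0)
    (hκ : ℵ₀ ≤ κ) (hι : #ι ≤ κ) (hf : ∀ i, #(f i) ≤ a ^ κ) : #(∀ i, f i) ≤ a ^ κ :=
  calc #(∀ i, f i) = Cardinal.prod fun i => #(f i) := mk_pi f
    _ ≤ Cardinal.prod fun _ : ι => a ^ κ := prod_le_prod _ _ hf
    _ = (a ^ κ) ^ #ι := prod_const' ι _
    _ ≤ (a ^ κ) ^ κ := power_le_power_left (power_ne_zero κ ha) hι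
    _ = a ^ κ := by rw [← power_mul, mul_eq_self hκ]

theorem aleph0_le_power_of_one_lt {a κ : Cardinal.{u}} (ha : 1 < a) (hκ : ℵ₀ ≤ κ) : ℵ₀ ≤ a ^ κ :=
  hκ.trans (cantor' κ ha).le

theorem mk_range_le_of_factorsThrough {X : Type*} {Y T : Type u} {f : X → Y} {g : X → T}
    (h : f.FactorsThrough g) : #(range f) ≤ #T := by
  refine mk_le_of_injective (f := fun y : range f => g y.2.choose) fun y y' hyy' => Subtype.ext ?_
  rw [← y.2.choose_spec, ← y'.2.choose_spec]
  exact h hyy'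

theorem mk_formula_le (L : FirstOrder.Language.{u, u}) (α : Type) [Countable α] :
    #(L.Formula α) ≤ L.card + ℵ₀ := by
  have hsigma : #(L.Formula α) ≤ #(Σ n, L.BoundedFormula α n) :=
    mk_le_of_injective (sigma_mk_injective (i := 0))
  refine hsigma.trans (BoundedFormula.card_le.trans (max_le le_add_self ?_))
  rw [add_comm, lift_id']
  exact add_le_add_right (lift_le_aleph0.2 mk_le_aleph0) _

theorem mk_formula_withConstants_le {L : FirstOrder.Language.{u, u}} {M : Type u} {B : Set M}
    (hB : B.Countable) (α : Type) [Countable α] : #(L[[B]].Formula α) ≤ L.card + ℵ₀ := by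
  refine (mk_formula_le _ α).trans ?_
  rw [card_withConstants, add_assoc, lift_id, lift_id]
  exact add_le_add_right (add_le_aleph0.2 ⟨le_aleph0_iff_set_countable.2 hB, le_rfl⟩) _

theorem mk_pi_formula_option_tuple_le {L : FirstOrder.Language.{u, u}} {M : Type u} {A B : Set M}
    (hB : B.Countable) (hA : 1 < #A) (α : Type) [Countable α] :
    #((i : Σ n, L[[B]].Formula (α ⊕ Fin n)) → Option (Fin i.1 → A)) ≤ #A ^ (L.card + ℵ₀) := by
  have hA₀ : #A ≠ 0 := (zero_lt_one.trans hA).ne'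
  have hpow : ℵ₀ ≤ #A ^ (L.card + ℵ₀) := aleph0_le_power_of_one_lt hA le_add_self
  refine mk_pi_le_power hA₀ le_add_self
    (mk_sigma_le_of_countable le_add_self fun n => mk_formula_withConstants_le hB _) fun i => ?_
  rw [mk_option]
  refine add_le_of_le hpow ?_ (one_le_aleph0.trans hpow)
  have hfin : lift.{u} #(Fin i.1) ≤ L.card + ℵ₀ :=
    (lift_le_aleph0.2 mk_le_aleph0).trans le_add_self
  simpa only [mk_pi, prod_const, lift_uzero] using power_le_power_left hA₀ hfin

end Cardinals

section TypesOver

variable {L : FirstOrder.Language} {M : Type*} [L.Structure M] {A : Set M} {m : ℕ}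

theorem exists_mem_iff_paramSentenceOver_mem (σ : (L[[↥A]])[[Fin m]].Sentence) :
    ∃ (n : ℕ) (φ : L.Formula (Fin m ⊕ Fin n)) (b : Fin n → A),
      ∀ p : ((L[[↥A]]).completeTheory M).CompleteType (Fin m),
        σ ∈ p ↔ paramSentenceOver A φ b ∈ p := by
  classical
  -- Only the finitely many constants from `A` that occur in `σ` become parameters.
  obtain ⟨θ, rfl⟩ := Formula.equivSentence.surjective σ
  let θ' : L.BoundedFormula (A ⊕ Fin m) 0 := BoundedFormula.constantsVarsEquiv θ
  let F : Finset A := θ'.freeVarFinset.toLeft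
  let g : F ≃ Fin F.card := F.equivFin
  let f : θ'.freeVarFinset → Fin m ⊕ Fin F.card := fun x => Sum.casesOn x.1
    (fun a ha => Sum.inr (g ⟨a, by simpa [F] using ha⟩)) (fun i _ => Sum.inl i) x.2
  refine ⟨F.card, θ'.restrictFreeVar f, fun j => (g.symm j).1, fun p => ?_⟩
  obtain ⟨N, v, rfl⟩ := Theory.exists_modelType_is_realized_in _ p
  rw [paramSentenceOver, Theory.CompleteType.formula_mem_typeOf,
    Theory.CompleteType.formula_mem_typeOf]
  let _ : L.Structure N := (L.lhomWithConstants A).reduct N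
  have : (L.lhomWithConstants A).IsExpansionOn N := LHom.isExpansionOn_reduct _ _
  rw [Formula.Realize, ← BoundedFormula.realize_constantsVarsEquiv (L := L), Formula.Realize,
    BoundedFormula.realize_subst]
  change _ ↔ ((L.lhomWithConstants A).onFormula _).Realize _
  rw [LHom.realize_onFormula]
  refine (BoundedFormula.realize_restrictFreeVar _ ?_).symm
  rintro ⟨a | i, h⟩ <;> simp [f]

theorem completeType_eq_of_paramSentenceOver_mem_iff
    {p q : ((L[[↥A]]).completeTheory M).CompleteType (Fin m)}
    (h : ∀ (n : ℕ) (φ : L.Formula (Fin m ⊕ Fin n)) (b : Fin n → A),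
      paramSentenceOver A φ b ∈ p ↔ paramSentenceOver A φ b ∈ q) : p = q := by
  refine SetLike.ext fun σ => ?_
  obtain ⟨n, φ, b, hσ⟩ := exists_mem_iff_paramSentenceOver_mem σ
  rw [hσ p, hσ q, h n φ b]

end TypesOver

section Counting

variable {L : FirstOrder.Language.{u, u}} {M : Type u} [L.Structure M] {A B : Set M} {α : Type}
  {m n : ℕ} {c d : α → M}

open Classical in
/-- For each `L`-formula over `B` which `c` satisfies together with some tuple from `A`, a choice of
such a tuple. -/
noncomputable def witnessCode (A B : Set M) (c : α → M)
    (i : Σ n, L[[B]].Formula (α ⊕ Fin n)) : Option (Fin i.1 → A) :=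
  if h : ∃ a : Fin i.1 → A, i.2.Realize (Sum.elim c fun j => a j) then some h.choose else none

theorem realize_of_mem_witnessCode {i : Σ n, L[[B]].Formula (α ⊕ Fin n)} {a : Fin i.1 → A}
    (ha : a ∈ witnessCode A B c i) : i.2.Realize (Sum.elim c fun j => a j) := by
  unfold witnessCode at ha
  split_ifs at ha with h
  · exact Option.some_injective _ ha ▸ h.choose_spec
  · cases ha

theorem exists_mem_witnessCode {i : Σ n, L[[B]].Formula (α ⊕ Fin n)} {a : Fin i.1 → A}
    (ha : i.2.Realize (Sum.elim c fun j => a j)) : ∃ a, a ∈ witnessCode A B c i :=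
  ⟨_, dif_pos ⟨a, ha⟩⟩

theorem haveCommonWitnesses_of_witnessCode_eq
    (h : witnessCode (L := L) A B c = witnessCode A B d) : HaveCommonWitnesses L A B c d := by
  intro β _ P hP b hb hPb
  obtain ⟨n, ⟨e⟩⟩ := Finite.exists_equiv_fin β
  obtain ⟨φ, hφ⟩ := hP.subst Sum.inl fun i => Sum.inr (e i)
  have realize_iff (v : α → M) (a : Fin n → A) :
      φ.Realize (Sum.elim v fun j => a j) ↔ P v fun i => a (e i) :=
    (Set.ext_iff.1 hφ (Sum.elim v fun j => a j)).symm
  obtain ⟨a, ha⟩ : ∃ a, a ∈ witnessCode A B c ⟨n, φ⟩ := by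
    refine exists_mem_witnessCode (a := fun j => ⟨b (e.symm j), hb _⟩) ((realize_iff c _).2 ?_)
    simpa only [e.symm_apply_apply] using hPb
  exact ⟨fun i => a (e i), fun i => (a (e i)).2,
    (realize_iff c a).1 (realize_of_mem_witnessCode ha),
    (realize_iff d a).1 (realize_of_mem_witnessCode (h ▸ ha))⟩

/-- The trace on `A` of the set defined by `ψ(y; c)`. -/
def trace (A : Set M) (ψ : L.Formula (Fin n ⊕ α)) (c : α → M) : Set (Fin n → A) :=
  {b | ψ.Realize (Sum.elim (fun i => (b i : M)) c)}

theorem SameTypeOver.trace_eq (h : SameTypeOver L A B c d) (ψ : L.Formula (Fin n ⊕ α)) :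
    trace A ψ c = trace A ψ d := by
  have hP : DefinableRel L B fun e b => ψ.Realize (Sum.elim b e) := by
    have swap_eq (v : α ⊕ Fin n → M) :
        (fun i => v i.swap) = Sum.elim (fun i => v (.inr i)) fun i => v (.inl i) :=
      funext (Sum.rec (fun _ => rfl) fun _ => rfl)
    have hψ : DefinablePred L B fun v : α ⊕ Fin n → M => ψ.Realize fun i => v i.swap :=
      (DefinablePred.formula_realize ψ).subst Sum.swap
    simpa only [DefinableRel, swap_eq] using hψ
  exact Set.ext fun b => h hP _ fun i => (b i).2

variable (L A n) in
/-- The traces on `A` of the `n`-ary relations definable in `M`. -/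
def definableTraces : Set (Set (Fin n → A)) :=
  ⋃ i : Σ k, L.Formula (Fin n ⊕ Fin k), range (trace A i.2)

section OMinimal

variable [LinearOrder M]

theorem mk_range_trace_le [Finite α] (hM : IsOMinimalExpansion L M) (hB : B.Countable)
    (hAB : B.Definable₁ L A) (hA : 1 < #A) (ψ : L.Formula (Fin n ⊕ α)) :
    #(range (trace A ψ)) ≤ #A ^ (L.card + ℵ₀) :=
  (mk_range_le_of_factorsThrough (g := witnessCode (L := L) A B) fun _ _ h =>
    ((haveCommonWitnesses_of_witnessCode_eq h).sameTypeOver hM hAB).trace_eq ψ).trans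
    (mk_pi_formula_option_tuple_le hB hA α)

theorem mk_definableTraces_le (hM : IsOMinimalExpansion L M)
    (hAdef : (Set.univ : Set M).Definable₁ L A) (hA : 1 < #A) (n : ℕ) :
    #(definableTraces L A n) ≤ #A ^ (L.card + ℵ₀) := by
  obtain ⟨B, -, hAB⟩ := Set.definable_iff_finitely_definable.1 hAdef
  calc #(definableTraces L A n)
      ≤ #(Σ k, L.Formula (Fin n ⊕ Fin k)) * ⨆ i : Σ k, L.Formula (Fin n ⊕ Fin k),
          #(range (trace A i.2)) := mk_iUnion_le _
    _ ≤ #A ^ (L.card + ℵ₀) * #A ^ (L.card + ℵ₀) := by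
      refine mul_le_mul' ?_ (ciSup_le' fun i => ?_)
      · exact (mk_sigma_le_of_countable le_add_self fun k => mk_formula_le L _).trans
          (cantor' _ hA).le
      · exact mk_range_trace_le hM B.finite_toSet.countable hAB hA i.2
    _ = #A ^ (L.card + ℵ₀) := mul_eq_self (aleph0_le_power_of_one_lt hA le_add_self)

end OMinimal

variable (A m) in
/-- The sets `{b ∈ Aⁿ : φ(x; b) ∈ p}`, for all `n` and all `L`-formulas `φ`. -/
def definitionScheme
    (p : {p : ((L[[↥A]]).completeTheory M).CompleteType (Fin m) // IsDefinableTypeOver A p})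
    (i : Σ n, L.Formula (Fin m ⊕ Fin n)) : definableTraces L A i.1 :=
  ⟨{b | paramSentenceOver A i.2 b ∈ p.1}, by
    obtain ⟨k, ψ, c, h⟩ := p.2 i.1 i.2
    exact mem_iUnion.2 ⟨⟨k, ψ⟩, c, h.symm⟩⟩

theorem definitionScheme_injective : Function.Injective (definitionScheme (L := L) A m) := by
  intro p q hpq
  refine Subtype.ext (completeType_eq_of_paramSentenceOver_mem_iff fun n φ b => ?_)
  exact Set.ext_iff.1 (congrArg Subtype.val (congrFun hpq ⟨n, φ⟩)) b

end Counting

theorem card_definable_types_over_le_general {L : FirstOrder.Language.{u, u}} {M : Type u}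
    [L.Structure M] [LinearOrder M] (hM : IsOMinimalExpansion L M) (A : Set M)
    (hAdef : (Set.univ : Set M).Definable₁ L A) (hA : 1 < #A) :
    #(Σ m : ℕ, {p : ((L[[↥A]]).completeTheory M).CompleteType (Fin m) //
        IsDefinableTypeOver A p}) ≤ #A ^ (L.card + ℵ₀) := by
  refine mk_sigma_le_of_countable (aleph0_le_power_of_one_lt hA le_add_self) fun m => ?_
  refine (mk_le_of_injective definitionScheme_injective).trans ?_
  refine mk_pi_le_power (zero_lt_one.trans hA).ne' le_add_self ?_ fun i => ?_
  · exact mk_sigma_le_of_countable le_add_self fun n => mk_formula_le L _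
  · exact mk_definableTraces_le hM hAdef hA i.1

/-- If `M` is an o-minimal `L`-structure and `A ⊆ M` is a definable set with `|A| > 1`, then
the set `S^def(A)` of definable types over `A` (in any tuple of object variables) has
cardinality at most `|A| ^ (|L| + ℵ₀)`. -/
theorem card_definable_types_over_le {L : FirstOrder.Language.{u, u}} {M : Type u}
    [L.Structure M] [LinearOrder M] (hM : IsOMinimal L M) (A : Set M)
    (hAdef : (Set.univ : Set M).Definable₁ L A) (hA : 1 < #A) :
    #(Σ m : ℕ, {p : ((L[[↥A]]).completeTheory M).CompleteType (Fin m) //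
        IsDefinableTypeOver A p}) ≤ #A ^ (L.card + ℵ₀) :=
  card_definable_types_over_le_general hM.isOMinimalExpansion A hAdef hA
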